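/- arXiv:1104.3543 — 2 statements merged into one kernel-verified Lean document; each statement's English description precedes it below -/
import Mathlib

section
/- Suppose X ⊆ W is a block subspace, (y_0,y_1,…) is a block sequence in X, α < ω₁ and K ≥ 1. Assume that player II has a strategy in F^{ω·α}_X to play outcomes (x_0,…,x_k) satisfying (x_0,…,x_k) ∼_K (y_0,…,y_k). Then II has a strategy in the game B^α_X to play outcomes (u_0,v_0,u_1,v_1,…,u_k,v_k) such that (u_0,…,u_k) ∼_K (v_0,…,v_k). -/
open Filter Topology

namespace Rosendal

variable {𝒲 : Type} [NormedAddCommGroup 𝒲] [NormedSpace ℝ 𝒲]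

/-- `(e n)` is a Schauder basis of the Banach space `𝒲`. -/
def IsSchauderBasis (e : ℕ → 𝒲) : Prop :=
  ∀ x : 𝒲, ∃! a : ℕ → ℝ,
    Tendsto (fun N => ∑ i ∈ Finset.range N, a i • e i) atTop (𝓝 x)

/-- `x` is a linear combination of the vectors `b i`, `i ∈ s`. -/
def SuppIn (b : ℕ → 𝒲) (x : 𝒲) (s : Finset ℕ) : Prop :=
  ∃ a : ℕ → ℝ, x = ∑ i ∈ s, a i • b i

/-- `(x i)_{i<k} ∼_K (y i)_{i<k}`. -/
def SeqEquiv (K : ℝ) (k : ℕ) (x y : ℕ → 𝒲) : Prop :=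
  ∀ a : ℕ → ℝ,
    (1 / K) * ‖∑ i ∈ Finset.range k, a i • x i‖ ≤ ‖∑ i ∈ Finset.range k, a i • y i‖ ∧
    ‖∑ i ∈ Finset.range k, a i • y i‖ ≤ K * ‖∑ i ∈ Finset.range k, a i • x i‖

/-- The outcome `l = (x 0, …, x k)` satisfies `(x 0, …, x k) ∼_K (y 0, …, y k)`. -/
def OutcomeEquiv (K : ℝ) (l : List 𝒲) (y : ℕ → 𝒲) : Prop :=
  SeqEquiv K l.length (fun i => l.getD i 0) y

/-- The outcome `l = (u 0, v 0, u 1, v 1, …, u k, v k)` satisfies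
`(u 0, …, u k) ∼_K (v 0, …, v k)`. -/
def PairOutcomeEquiv (K : ℝ) (l : List 𝒲) : Prop :=
  SeqEquiv K (l.length / 2) (fun i => l.getD (2 * i) 0) (fun i => l.getD (2 * i + 1) 0)

/-- The tree `T((x n), Y, K)`. -/
def embTree (x : ℕ → 𝒲) (Y : Set 𝒲) (K : ℝ) : Set (List 𝒲) :=
  {l | (∀ v ∈ l, v ∈ Y) ∧ SeqEquiv K l.length (fun i => l.getD i 0) x}

open Classical in
/-- The rank of a tree of finite sequences; `⊤ = ∞` if it is ill-founded. -/
noncomputable def treeRank (T : Set (List 𝒲)) : WithTop Ordinal :=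
  if h : WellFounded (fun t s : T => s.val <+: t.val ∧ s.val ≠ t.val) then
    ((⨆ s : T, Order.succ ((h.apply s).rank) : Ordinal) : WithTop Ordinal)
  else ⊤

open Classical in
/-- The embeddability index `Emb((x n), Y) = sup_{K ≥ 1} rank T((x n), Y, K)`. -/
noncomputable def embIndex (x : ℕ → 𝒲) (Y : Set 𝒲) : WithTop Ordinal :=
  if ∃ K : ℝ, 1 ≤ K ∧ treeRank (embTree x Y K) = ⊤ then ⊤
  else ((sSup {o : Ordinal | ∃ K : ℝ, 1 ≤ K ∧
      (o : WithTop Ordinal) = treeRank (embTree x Y K)} : Ordinal) : WithTop Ordinal)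

/-- `(I m)` is a sequence of successive nonempty finite intervals `I 0 < I 1 < …` of `ℕ`. -/
def IntervalSeq (I : ℕ → Finset ℕ) : Prop :=
  (∀ m, ∃ a b : ℕ, a ≤ b ∧ I m = Finset.Icc a b) ∧
  ∀ m, ∀ i ∈ I m, ∀ j ∈ I (m + 1), i < j

/-- The setting of Section 2 of the paper: a Banach space `𝒲` with a Schauder basis
`(e n)`, a countable subfield `𝔽 ⊆ ℝ` closed under the norms of finite `𝔽`-linear
combinations of the basis, and the countable `𝔽`-vector space `W` spanned by `(e n)`. -/
structure Frame (𝒲 : Type) [NormedAddCommGroup 𝒲] [NormedSpace ℝ 𝒲] : Type where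
  e : ℕ → 𝒲
  complete : CompleteSpace 𝒲
  basis : IsSchauderBasis e
  𝔽 : Subfield ℝ
  countable : (𝔽 : Set ℝ).Countable
  norm_mem : ∀ (s : Finset ℕ) (a : ℕ → ℝ), (∀ i ∈ s, a i ∈ 𝔽) →
    ‖∑ i ∈ s, a i • e i‖ ∈ 𝔽

namespace Frame

variable {𝒲 : Type} [NormedAddCommGroup 𝒲] [NormedSpace ℝ 𝒲] (ctx : Frame 𝒲)

/-- The `𝔽`-linear span of a set of vectors. -/
def fspan (S : Set 𝒲) : Set 𝒲 :=
  {v | ∃ t : Finset 𝒲, ↑t ⊆ S ∧ ∃ c : 𝒲 → ℝ, (∀ w, c w ∈ ctx.𝔽) ∧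
    v = ∑ w ∈ t, c w • w}

/-- The countable `𝔽`-vector space `W` with basis `(e n)`. -/
def W : Set 𝒲 := ctx.fspan (Set.range ctx.e)

/-- `(y n)` is a block sequence with respect to the reference block basis `(b n)`:
a sequence of nonzero vectors of the `𝔽`-span of `(b n)` with successive supports. -/
def BlockSeqRel (b y : ℕ → 𝒲) : Prop :=
  (∀ n, y n ∈ ctx.fspan (Set.range b)) ∧ (∀ n, y n ≠ 0) ∧
  ∃ D : ℕ → Finset ℕ, (∀ n, SuppIn b (y n) (D n)) ∧
    ∀ n, ∀ i ∈ D n, ∀ j ∈ D (n + 1), i < j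

/-- `(y n)` is a block sequence (with respect to the basis `(e n)` of `W`). -/
def IsBlockSeq (y : ℕ → 𝒲) : Prop := ctx.BlockSeqRel ctx.e y

/-- `Y` is a block subspace of `X`: the `𝔽`-span of an infinite block sequence of
vectors of `X`. -/
def IsBlockSubspaceOf (Y X : Set 𝒲) : Prop :=
  ∃ y : ℕ → 𝒲, ctx.IsBlockSeq y ∧ (∀ n, y n ∈ X) ∧ Y = ctx.fspan (Set.range y)

/-- `Y` is a block subspace of `W`. -/
def IsBlockSubspace (Y : Set 𝒲) : Prop := ctx.IsBlockSubspaceOf Y ctx.W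

/-- `F` is a finite-dimensional `𝔽`-subspace of `X`. -/
def IsFinDimIn (F X : Set 𝒲) : Prop :=
  ∃ t : Finset 𝒲, ↑t ⊆ X ∧ F = ctx.fspan ↑t

/-- `n < F`: every vector of `F` is supported on basis vectors of index `> n`. -/
def NatLt (n : ℕ) (F : Set 𝒲) : Prop :=
  ∀ x ∈ F, ∃ s : Finset ℕ, SuppIn ctx.e x s ∧ ∀ i ∈ s, n < i

/-- `V` is an `𝔽`-subspace of `𝒲`. -/
def IsSubspace (V : Set 𝒲) : Prop :=
  (0 : 𝒲) ∈ V ∧ (∀ u v : 𝒲, u ∈ V → v ∈ V → u + v ∈ V) ∧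
    ∀ c : ℝ, c ∈ ctx.𝔽 → ∀ v ∈ V, c • v ∈ V

/-- `V` is infinite-dimensional (not contained in a finitely generated subspace). -/
def IsInfDim (V : Set 𝒲) : Prop :=
  ¬∃ t : Finset 𝒲, V ⊆ ctx.fspan ↑t

/-- Game values of the asymptotic game `F^β_X`, for player II, computed by transfinite
recursion on the ordinal bound.  `IIWinsF X S β Facc vec` states: in the asymptotic game
below `X`, from a position where the vectors `vec` have been played and the
finite-dimensional subspaces played by II span `Facc`, and where I must now play a natural
number together with an ordinal `< β`, player II has a strategy so that the final outcome
lies in `S`. -/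
noncomputable def IIWinsF (X : Set 𝒲) (S : Set (List 𝒲)) :
    Ordinal → Set 𝒲 → List 𝒲 → Prop :=
  WellFounded.fix (C := fun _ : Ordinal => Set 𝒲 → List 𝒲 → Prop) Ordinal.lt_wf
    (fun β ih Facc vec =>
      ∀ n : ℕ, ∀ ξ : Ordinal, ∀ hξ : ξ < β,
        ∃ F : Set 𝒲, ctx.IsFinDimIn F X ∧ ctx.NatLt n F ∧
          ∃ x : 𝒲, x ≠ 0 ∧ x ∈ ctx.fspan (Facc ∪ F) ∧
            (ξ = 0 → vec ++ [x] ∈ S) ∧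
            (ξ ≠ 0 → ih ξ hξ (ctx.fspan (Facc ∪ F)) (vec ++ [x])))

/-- Player II has a strategy in the asymptotic game `F^β_X` to play an outcome in `S`. -/
noncomputable def IIStratF (X : Set 𝒲) (β : Ordinal) (S : Set (List 𝒲)) : Prop :=
  (β = 0 → ([] : List 𝒲) ∈ S) ∧ (β ≠ 0 → ctx.IIWinsF X S β (ctx.fspan ∅) [])

/-- Game values of the asymptotic game `F^β_X` for player I (who plays the integers and
the ordinals, trying to steer the outcome into `S`). -/
noncomputable def IWinsF (X : Set 𝒲) (S : Set (List 𝒲)) :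
    Ordinal → Set 𝒲 → List 𝒲 → Prop :=
  WellFounded.fix (C := fun _ : Ordinal => Set 𝒲 → List 𝒲 → Prop) Ordinal.lt_wf
    (fun β ih Facc vec =>
      ∃ n : ℕ, ∃ ξ : Ordinal, ∃ hξ : ξ < β,
        ∀ F : Set 𝒲, ctx.IsFinDimIn F X → ctx.NatLt n F →
        ∀ x : 𝒲, x ≠ 0 → x ∈ ctx.fspan (Facc ∪ F) →
          (ξ = 0 → vec ++ [x] ∈ S) ∧
          (ξ ≠ 0 → ih ξ hξ (ctx.fspan (Facc ∪ F)) (vec ++ [x])))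

/-- Player I has a strategy in the asymptotic game `F^β_X` to play an outcome in `S`. -/
noncomputable def IStratF (X : Set 𝒲) (β : Ordinal) (S : Set (List 𝒲)) : Prop :=
  (β = 0 → ([] : List 𝒲) ∈ S) ∧ (β ≠ 0 → ctx.IWinsF X S β (ctx.fspan ∅) [])

/-- Game values of the Gowers game `G^α_X` for player II. -/
noncomputable def IIWinsG (X : Set 𝒲) (S : Set (List 𝒲)) :
    Ordinal → Set 𝒲 → List 𝒲 → Prop :=
  WellFounded.fix (C := fun _ : Ordinal => Set 𝒲 → List 𝒲 → Prop) Ordinal.lt_wf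
    (fun α ih Facc vec =>
      ∀ Y : Set 𝒲, ctx.IsBlockSubspaceOf Y X →
      ∀ ξ : Ordinal, ∀ hξ : ξ < α,
        ∃ F : Set 𝒲, ctx.IsFinDimIn F Y ∧
          ∃ x : 𝒲, x ≠ 0 ∧ x ∈ ctx.fspan (Facc ∪ F) ∧
            (ξ = 0 → vec ++ [x] ∈ S) ∧
            (ξ ≠ 0 → ih ξ hξ (ctx.fspan (Facc ∪ F)) (vec ++ [x])))

/-- Player II has a strategy in the generalised Gowers game `G^α_X` to play in `S`. -/
noncomputable def IIStratG (X : Set 𝒲) (α : Ordinal) (S : Set (List 𝒲)) : Prop :=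
  (α = 0 → ([] : List 𝒲) ∈ S) ∧ (α ≠ 0 → ctx.IIWinsG X S α (ctx.fspan ∅) [])

/-- Game values of the adversarial game `A^α_X` for player II (who plays the integers,
the finite-dimensional subspaces `F_l ⊆ Y_l` and the vectors `y_l`). -/
noncomputable def IIWinsA (X : Set 𝒲) (S : Set (List 𝒲)) :
    Ordinal → Set 𝒲 → Set 𝒲 → List 𝒲 → Prop :=
  WellFounded.fix (C := fun _ : Ordinal => Set 𝒲 → Set 𝒲 → List 𝒲 → Prop)
    Ordinal.lt_wf
    (fun α ih Eacc Facc vec =>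
      ∃ n : ℕ,
        ∀ E : Set 𝒲, ctx.IsFinDimIn E X → ctx.NatLt n E →
        ∀ x : 𝒲, x ≠ 0 → x ∈ ctx.fspan (Eacc ∪ E) →
        ∀ Y : Set 𝒲, ctx.IsBlockSubspaceOf Y X →
        ∀ ξ : Ordinal, ∀ hξ : ξ < α,
          ∃ F : Set 𝒲, ctx.IsFinDimIn F Y ∧
            ∃ y : 𝒲, y ≠ 0 ∧ y ∈ ctx.fspan (Facc ∪ F) ∧
              (ξ = 0 → vec ++ [x, y] ∈ S) ∧
              (ξ ≠ 0 → ih ξ hξ (ctx.fspan (Eacc ∪ E)) (ctx.fspan (Facc ∪ F))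
                (vec ++ [x, y])))

/-- Player II has a strategy in the adversarial game `A^α_X` to play in `S`. -/
noncomputable def IIStratA (X : Set 𝒲) (α : Ordinal) (S : Set (List 𝒲)) : Prop :=
  (α = 0 → ([] : List 𝒲) ∈ S) ∧
  (α ≠ 0 → ctx.IIWinsA X S α (ctx.fspan ∅) (ctx.fspan ∅) [])

/-- Game values of the adversarial game `B^α_X` for player I (who plays the
finite-dimensional subspaces `E_l ⊆ Y_l`, the vectors `x_l`, the integers and the
ordinals). -/
noncomputable def IWinsB (X : Set 𝒲) (S : Set (List 𝒲)) :
    Ordinal → Set 𝒲 → Set 𝒲 → List 𝒲 → Prop :=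
  WellFounded.fix (C := fun _ : Ordinal => Set 𝒲 → Set 𝒲 → List 𝒲 → Prop)
    Ordinal.lt_wf
    (fun α ih Eacc Facc vec =>
      ∀ Y : Set 𝒲, ctx.IsBlockSubspaceOf Y X →
        ∃ E : Set 𝒲, ctx.IsFinDimIn E Y ∧
          ∃ x : 𝒲, x ≠ 0 ∧ x ∈ ctx.fspan (Eacc ∪ E) ∧
            ∃ n : ℕ, ∃ ξ : Ordinal, ∃ hξ : ξ < α,
              ∀ F : Set 𝒲, ctx.IsFinDimIn F X → ctx.NatLt n F →
              ∀ y : 𝒲, y ≠ 0 → y ∈ ctx.fspan (Facc ∪ F) →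
                (ξ = 0 → vec ++ [x, y] ∈ S) ∧
                (ξ ≠ 0 → ih ξ hξ (ctx.fspan (Eacc ∪ E)) (ctx.fspan (Facc ∪ F))
                  (vec ++ [x, y])))

/-- Player I has a strategy in the adversarial game `B^α_X` to play in `S`. -/
noncomputable def IStratB (X : Set 𝒲) (α : Ordinal) (S : Set (List 𝒲)) : Prop :=
  (α = 0 → ([] : List 𝒲) ∈ S) ∧
  (α ≠ 0 → ctx.IWinsB X S α (ctx.fspan ∅) (ctx.fspan ∅) [])

/-- Game values of the adversarial game `B^α_X` for player II (who plays the block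
subspaces `Y_l`, the finite-dimensional subspaces `F_l` and the vectors `y_l`). -/
noncomputable def IIWinsB (X : Set 𝒲) (S : Set (List 𝒲)) :
    Ordinal → Set 𝒲 → Set 𝒲 → List 𝒲 → Prop :=
  WellFounded.fix (C := fun _ : Ordinal => Set 𝒲 → Set 𝒲 → List 𝒲 → Prop)
    Ordinal.lt_wf
    (fun α ih Eacc Facc vec =>
      ∃ Y : Set 𝒲, ctx.IsBlockSubspaceOf Y X ∧
        ∀ E : Set 𝒲, ctx.IsFinDimIn E Y →
        ∀ x : 𝒲, x ≠ 0 → x ∈ ctx.fspan (Eacc ∪ E) →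
        ∀ n : ℕ, ∀ ξ : Ordinal, ∀ hξ : ξ < α,
          ∃ F : Set 𝒲, ctx.IsFinDimIn F X ∧ ctx.NatLt n F ∧
            ∃ y : 𝒲, y ≠ 0 ∧ y ∈ ctx.fspan (Facc ∪ F) ∧
              (ξ = 0 → vec ++ [x, y] ∈ S) ∧
              (ξ ≠ 0 → ih ξ hξ (ctx.fspan (Eacc ∪ E)) (ctx.fspan (Facc ∪ F))
                (vec ++ [x, y])))

/-- Player II has a strategy in the adversarial game `B^α_X` to play in `S`. -/
noncomputable def IIStratB (X : Set 𝒲) (α : Ordinal) (S : Set (List 𝒲)) : Prop :=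
  (α = 0 → ([] : List 𝒲) ∈ S) ∧
  (α ≠ 0 → ctx.IIWinsB X S α (ctx.fspan ∅) (ctx.fspan ∅) [])

end Frame

end Rosendal

namespace Rosendal

/-!
In every round II offers the block subspace spanned by `(y n)`. Each vector `u` that I may then
play is a finite combination of the `y i`, say of `y 0, …, y (m - 1)`. When I announces an ordinal
`ξ < α`, we have `ω · ξ + m < ω · α`, so II can run `m + 1` rounds of the asymptotic game with the
bounds `ω · ξ + m, …, ω · ξ`. This yields enough vectors `x i` to answer `u` by the same
combination `v` of the `x i`. All the pairs `(v, u)` obtained lie in the real span of the pairs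
`(x i, y i)`, on which the norms of the two coordinates are `K`-equivalent.
-/

theorem ordinal_mul_add_lt_mul {a b c d : Ordinal} (hbc : b < c) (had : a < d) :
    c * a + b < c * d :=
  calc c * a + b
    _ < c * a + c := by gcongr
    _ = c * Order.succ a := (Ordinal.mul_succ c a).symm
    _ ≤ c * d := by
      gcongr
      exact Order.succ_le_of_lt had

section PairSpan

variable {E : Type*} [AddCommMonoid E] [Module ℝ E]

/-- The real span of the pairs `(x i, y i)`, `i < k`: the graph of `x i ↦ y i`, regarded as a linear
relation because the `x i` need not be linearly independent. -/
def pairSpan (k : ℕ) (x y : ℕ → E) : Submodule ℝ (E × E) :=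
  Submodule.span ℝ ((fun i => (x i, y i)) '' (Finset.range k : Set ℕ))

theorem mem_pairSpan_iff {k : ℕ} {x y : ℕ → E} {p : E × E} :
    p ∈ pairSpan k x y ↔
      ∃ a : ℕ → ℝ, (∑ i ∈ Finset.range k, a i • x i, ∑ i ∈ Finset.range k, a i • y i) = p := by
  simp only [pairSpan, Submodule.mem_span_image_finset_iff_exists_fun', Prod.smul_mk,
    prod_mk_sum]

theorem pairSpan_le_iff {k : ℕ} {x y : ℕ → E} {P : Submodule ℝ (E × E)} :
    pairSpan k x y ≤ P ↔ ∀ i < k, (x i, y i) ∈ P := by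
  rw [pairSpan, Submodule.span_le, Set.image_subset_iff, Finset.coe_range]
  rfl

theorem mk_mem_pairSpan {k i : ℕ} (hi : i < k) (x y : ℕ → E) : (x i, y i) ∈ pairSpan k x y :=
  pairSpan_le_iff.1 le_rfl i hi

theorem pairSpan_mono {k m : ℕ} (hkm : k ≤ m) (x y : ℕ → E) : pairSpan k x y ≤ pairSpan m x y :=
  pairSpan_le_iff.2 fun _ hi => mk_mem_pairSpan (hi.trans_le hkm) x y

theorem exists_mem_pairSpan (𝔽 : Subfield ℝ) {y : ℕ → E} {u : E}
    (hu : u ∈ Submodule.span 𝔽 (Set.range y)) :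
    ∃ m, ∀ x : ℕ → E, ∃ v ∈ Submodule.span 𝔽 (x '' Set.Iio m), (v, u) ∈ pairSpan m x y := by
  obtain ⟨c, rfl⟩ := Finsupp.mem_span_range_iff_exists_finsupp.1 hu
  obtain ⟨m, hm⟩ := c.support.exists_nat_subset_range
  refine ⟨m, fun x => ⟨∑ i ∈ Finset.range m, c i • x i, ?_, ?_⟩⟩
  · exact Submodule.sum_mem _ fun i hi => Submodule.smul_mem _ _ <|
      Submodule.subset_span ⟨i, Finset.mem_range.1 hi, rfl⟩
  · rw [Finsupp.sum_of_support_subset c hm _ fun i _ => zero_smul 𝔽 (y i)]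
    exact mem_pairSpan_iff.2 ⟨fun i => c i, rfl⟩

end PairSpan

namespace SeqEquiv

variable {𝒲 : Type} [NormedAddCommGroup 𝒲] [NormedSpace ℝ 𝒲] {K : ℝ} {k r : ℕ}
  {x y u v : ℕ → 𝒲}

theorem iff_forall_mem_pairSpan :
    SeqEquiv K k x y ↔
      ∀ p ∈ pairSpan k x y, (1 / K) * ‖p.1‖ ≤ ‖p.2‖ ∧ ‖p.2‖ ≤ K * ‖p.1‖ := by
  simp only [SeqEquiv, mem_pairSpan_iff, forall_exists_index, forall_apply_eq_imp_iff]

theorem of_pairSpan_le (h : SeqEquiv K k x y) (hle : pairSpan r u v ≤ pairSpan k x y) :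
    SeqEquiv K r u v :=
  iff_forall_mem_pairSpan.2 fun p hp => iff_forall_mem_pairSpan.1 h p (hle hp)

theorem symm (hK : 0 < K) (h : SeqEquiv K k x y) : SeqEquiv K k y x := by
  intro a
  obtain ⟨hlower, hupper⟩ := h a
  rw [one_div, inv_mul_le_iff₀ hK] at hlower ⊢
  exact ⟨hupper, hlower⟩

theorem fst_ne_zero (h : SeqEquiv K k x y) {v u : 𝒲} (hvu : (v, u) ∈ pairSpan k x y)
    (hu : u ≠ 0) : v ≠ 0 := by
  rintro rfl
  have hle : ‖u‖ ≤ K * ‖(0 : 𝒲)‖ := (iff_forall_mem_pairSpan.1 h _ hvu).2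
  rw [norm_zero, mul_zero] at hle
  exact hu (norm_le_zero_iff.1 hle)

end SeqEquiv

section Outcomes

variable {𝒲 : Type} [NormedAddCommGroup 𝒲] [NormedSpace ℝ 𝒲]

/-- The relation spanned by the pairs `(x i, y i)`, where `xs = (x 0, …, x k)` is an outcome of the
asymptotic game. -/
def outcomeSpan (xs : List 𝒲) (y : ℕ → 𝒲) : Submodule ℝ (𝒲 × 𝒲) :=
  pairSpan xs.length (fun i => xs.getD i 0) y

/-- The relation spanned by the pairs `(v i, u i)`, where `vec = (u 0, v 0, …, u k, v k)` is an
outcome of the adversarial game. The coordinates are swapped, so that II's vectors come first here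
and in `outcomeSpan`. -/
def answerSpan (vec : List 𝒲) : Submodule ℝ (𝒲 × 𝒲) :=
  pairSpan (vec.length / 2) (fun i => vec.getD (2 * i + 1) 0) (fun i => vec.getD (2 * i) 0)

theorem outcomeSpan_le_append (xs zs : List 𝒲) (y : ℕ → 𝒲) :
    outcomeSpan xs y ≤ outcomeSpan (xs ++ zs) y := by
  refine pairSpan_le_iff.2 fun i hi => ?_
  have hi' : i < (xs ++ zs).length := by rw [List.length_append]; omega
  rw [← List.getD_append _ zs _ _ hi]
  exact mk_mem_pairSpan hi' (fun j => (xs ++ zs).getD j 0) y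

theorem answerSpan_append_le {vec : List 𝒲} {u v : 𝒲} {P : Submodule ℝ (𝒲 × 𝒲)}
    (heven : Even vec.length) (hvec : answerSpan vec ≤ P) (huv : (v, u) ∈ P) :
    answerSpan (vec ++ [u, v]) ≤ P := by
  obtain ⟨r, hr⟩ := heven
  have hlen : (vec ++ [u, v]).length / 2 = r + 1 := by
    rw [List.length_append, List.length_cons, List.length_singleton]; omega
  refine pairSpan_le_iff.2 fun i hi => ?_
  rcases Nat.lt_succ_iff_lt_or_eq.1 (hlen ▸ hi) with hir | rfl
  · rw [List.getD_append _ _ _ _ (by omega), List.getD_append _ _ _ _ (by omega)]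
    exact pairSpan_le_iff.1 hvec i (by omega)
  · rw [List.getD_append_right _ _ _ _ (by omega), List.getD_append_right _ _ _ _ (by omega),
      show 2 * i + 1 - vec.length = 1 by omega, show 2 * i - vec.length = 0 by omega]
    exact huv

theorem PairOutcomeEquiv.of_answerSpan_le {K : ℝ} {vec xs : List 𝒲} {y : ℕ → 𝒲} (hK : 0 < K)
    (h : OutcomeEquiv K xs y) (hle : answerSpan vec ≤ outcomeSpan xs y) :
    PairOutcomeEquiv K vec :=
  (SeqEquiv.of_pairSpan_le h hle).symm hK

end Outcomes

namespace Frame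

variable {𝒲 : Type} [NormedAddCommGroup 𝒲] [NormedSpace ℝ 𝒲] (ctx : Frame 𝒲)

section Span

theorem fspan_eq_span (S : Set 𝒲) : ctx.fspan S = Submodule.span ctx.𝔽 S := by
  ext v
  constructor
  · rintro ⟨t, ht, c, hc, rfl⟩
    exact Submodule.sum_mem _ fun w hw =>
      Submodule.smul_mem _ (⟨c w, hc w⟩ : ctx.𝔽) (Submodule.subset_span (ht hw))
  · intro hv
    obtain ⟨f, t, ht, -, rfl⟩ := Submodule.mem_span_iff_exists_finset_subset.1 hv
    exact ⟨t, ht, fun w => f w, fun w => (f w).2, rfl⟩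

theorem subset_fspan (S : Set 𝒲) : S ⊆ ctx.fspan S := by
  rw [fspan_eq_span]
  exact Submodule.subset_span

theorem fspan_mono {S T : Set 𝒲} (h : S ⊆ T) : ctx.fspan S ⊆ ctx.fspan T := by
  rw [fspan_eq_span, fspan_eq_span]
  exact Submodule.span_mono h

theorem fspan_subset_fspan {S T : Set 𝒲} (h : S ⊆ ctx.fspan T) : ctx.fspan S ⊆ ctx.fspan T := by
  rw [fspan_eq_span] at h
  rw [fspan_eq_span, fspan_eq_span]
  exact Submodule.span_le.2 h

theorem fspan_fspan_union_union (A B C : Set 𝒲) :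
    ctx.fspan (ctx.fspan (A ∪ B) ∪ C) = ctx.fspan (A ∪ ctx.fspan (B ∪ C)) := by
  simp only [fspan_eq_span, Submodule.span_union, Submodule.span_eq, sup_assoc]

variable {ctx}

theorem IsFinDimIn.subset_fspan {F S : Set 𝒲} (h : ctx.IsFinDimIn F (ctx.fspan S)) :
    F ⊆ ctx.fspan S := by
  obtain ⟨t, ht, rfl⟩ := h
  exact ctx.fspan_subset_fspan ht

theorem IsFinDimIn.fspan_union {F G X : Set 𝒲} (hF : ctx.IsFinDimIn F X)
    (hG : ctx.IsFinDimIn G X) : ctx.IsFinDimIn (ctx.fspan (F ∪ G)) X := by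
  classical
  obtain ⟨s, hs, rfl⟩ := hF
  obtain ⟨t, ht, rfl⟩ := hG
  refine ⟨s ∪ t, ?_, ?_⟩
  · rw [Finset.coe_union]
    exact Set.union_subset hs ht
  · simp only [fspan_eq_span, Finset.coe_union, Submodule.span_union, Submodule.span_span]

theorem natLt_iff_subset_span {n : ℕ} {F : Set 𝒲} :
    ctx.NatLt n F ↔ F ⊆ Submodule.span ℝ (ctx.e '' Set.Ioi n) := by
  refine forall₂_congr fun x _ => ?_
  rw [SetLike.mem_coe]
  constructor
  · rintro ⟨s, ⟨a, rfl⟩, hs⟩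
    exact Submodule.sum_mem _ fun i hi =>
      Submodule.smul_mem _ _ (Submodule.subset_span ⟨i, hs i hi, rfl⟩)
  · intro hx
    obtain ⟨l, hl, rfl⟩ := (Finsupp.mem_span_image_iff_linearCombination ℝ).1 hx
    exact ⟨l.support, ⟨l, Finsupp.linearCombination_apply ℝ l⟩,
      fun i hi => (Finsupp.mem_supported ℝ l).1 hl hi⟩

theorem NatLt.fspan_union {n : ℕ} {F G : Set 𝒲} (hF : ctx.NatLt n F) (hG : ctx.NatLt n G) :
    ctx.NatLt n (ctx.fspan (F ∪ G)) := by
  rw [natLt_iff_subset_span] at hF hG ⊢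
  have hle : Submodule.span ctx.𝔽 (F ∪ G) ≤
      (Submodule.span ℝ (ctx.e '' Set.Ioi n)).restrictScalars ctx.𝔽 :=
    Submodule.span_le.2 (Set.union_subset hF hG)
  rw [fspan_eq_span]
  exact hle

end Span

section Games

/-- II has a strategy to finish the asymptotic game below `X` with an outcome in `S`, when the last
ordinal played is `β` (the game being over if `β = 0`), the vectors played are `vec` and the
subspaces played by II span `Facc`. At the empty position this is `IIStratF`. -/
def IIStratFAt (X : Set 𝒲) (β : Ordinal) (S : Set (List 𝒲)) (Facc : Set 𝒲) (vec : List 𝒲) :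
    Prop :=
  (β = 0 → vec ∈ S) ∧ (β ≠ 0 → ctx.IIWinsF X S β Facc vec)

/-- The analogue of `IIStratFAt` for the adversarial game `B`, where I's subspaces span `Eacc`. At
the empty position this is `IIStratB`. -/
def IIStratBAt (X : Set 𝒲) (α : Ordinal) (S : Set (List 𝒲)) (Eacc Facc : Set 𝒲)
    (vec : List 𝒲) : Prop :=
  (α = 0 → vec ∈ S) ∧ (α ≠ 0 → ctx.IIWinsB X S α Eacc Facc vec)

variable {ctx} {X : Set 𝒲} {S : Set (List 𝒲)} {Eacc Facc : Set 𝒲} {vec : List 𝒲}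

theorem IIStratFAt.exists_move {β ξ : Ordinal} (h : ctx.IIStratFAt X β S Facc vec) (hξ : ξ < β)
    (n : ℕ) :
    ∃ F, ctx.IsFinDimIn F X ∧ ctx.NatLt n F ∧ ∃ x ∈ ctx.fspan (Facc ∪ F),
      ctx.IIStratFAt X ξ S (ctx.fspan (Facc ∪ F)) (vec ++ [x]) := by
  have hwins := h.2 (pos_of_gt hξ).ne'
  rw [IIWinsF, WellFounded.fix_eq] at hwins
  obtain ⟨F, hF, hn, x, -, hx, hnext⟩ := hwins n ξ hξ
  exact ⟨F, hF, hn, x, hx, hnext⟩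

theorem IIStratFAt.exists_moves {β ξ : Ordinal} {m : ℕ} (h : ctx.IIStratFAt X β S Facc vec)
    (hξ : ξ + m < β) (n : ℕ) :
    ∃ F, ctx.IsFinDimIn F X ∧ ctx.NatLt n F ∧ ∃ xs : List 𝒲, xs.length = m + 1 ∧
      (∀ x ∈ xs, x ∈ ctx.fspan (Facc ∪ F)) ∧
      ctx.IIStratFAt X ξ S (ctx.fspan (Facc ∪ F)) (vec ++ xs) := by
  induction m generalizing β Facc vec with
  | zero =>
    obtain ⟨F, hF, hn, x, hx, hnext⟩ := h.exists_move (by simpa using hξ) n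
    exact ⟨F, hF, hn, [x], rfl, by simpa using hx, hnext⟩
  | succ m ih =>
    obtain ⟨F, hF, hnF, x, hx, hmove⟩ := h.exists_move hξ n
    have hdecr : ξ + (m : Ordinal) < ξ + ((m + 1 : ℕ) : Ordinal) := by
      gcongr
      exact m.lt_succ_self
    obtain ⟨G, hG, hnG, xs, hlen, hxs, hnext⟩ := ih hmove hdecr
    have hx' : x ∈ ctx.fspan (ctx.fspan (Facc ∪ F) ∪ G) := ctx.subset_fspan _ (Or.inl hx)
    rw [fspan_fspan_union_union] at hx' hxs hnext
    refine ⟨ctx.fspan (F ∪ G), hF.fspan_union hG, hnF.fspan_union hnG, x :: xs, ?_, ?_, ?_⟩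
    · rw [List.length_cons, hlen]
    · exact List.forall_mem_cons.2 ⟨hx', hxs⟩
    · rwa [List.append_cons]

theorem IIStratFAt.exists_append_mem {β : Ordinal} (h : ctx.IIStratFAt X β S Facc vec) :
    ∃ zs : List 𝒲, vec ++ zs ∈ S := by
  rcases eq_or_ne β 0 with hβ | hβ
  · exact ⟨[], by simpa using h.1 hβ⟩
  · obtain ⟨F, -, -, x, -, hx⟩ := h.exists_move (pos_iff_ne_zero.2 hβ) 0
    exact ⟨[x], hx.1 rfl⟩

theorem IIStratBAt.of_moves {α : Ordinal} {Y : Set 𝒲} (hzero : α = 0 → vec ∈ S)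
    (hY : ctx.IsBlockSubspaceOf Y X)
    (hmove : ∀ E, ctx.IsFinDimIn E Y → ∀ u ≠ 0, u ∈ ctx.fspan (Eacc ∪ E) →
      ∀ (n : ℕ), ∀ ξ < α, ∃ F, ctx.IsFinDimIn F X ∧ ctx.NatLt n F ∧
        ∃ v ≠ 0, v ∈ ctx.fspan (Facc ∪ F) ∧
          ctx.IIStratBAt X ξ S (ctx.fspan (Eacc ∪ E)) (ctx.fspan (Facc ∪ F)) (vec ++ [u, v])) :
    ctx.IIStratBAt X α S Eacc Facc vec := by
  refine ⟨hzero, fun _ => ?_⟩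
  rw [IIWinsB, WellFounded.fix_eq]
  exact ⟨Y, hY, hmove⟩

end Games

section Transfer

/-- The invariant of II's strategy: a position of the adversarial game, given by the accumulated
subspaces `Eacc`, `Facc` and the vectors `vec`, is shadowed by the vectors `xs` of an asymptotic
game, II's subspaces being the same in both games. -/
structure Shadows (y : ℕ → 𝒲) (Eacc Facc : Set 𝒲) (vec xs : List 𝒲) : Prop where
  subset_fspan : Eacc ⊆ ctx.fspan (Set.range y)
  mem_Facc : ∀ x ∈ xs, x ∈ Facc
  even_length : Even vec.length
  answerSpan_le : answerSpan vec ≤ outcomeSpan xs y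

theorem Shadows.nil (y : ℕ → 𝒲) : ctx.Shadows y (ctx.fspan ∅) (ctx.fspan ∅) [] [] where
  subset_fspan := ctx.fspan_mono (Set.empty_subset _)
  mem_Facc := by simp
  even_length := Even.zero
  answerSpan_le := pairSpan_le_iff.2 fun i hi => absurd hi (by simp)

variable {ctx} {X Eacc Facc : Set 𝒲} {y : ℕ → 𝒲} {vec xs : List 𝒲}

theorem Shadows.append {E F : Set 𝒲} {zs : List 𝒲} {u v : 𝒲}
    (h : ctx.Shadows y Eacc Facc vec xs) (hE : E ⊆ ctx.fspan (Set.range y))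
    (hzs : ∀ z ∈ zs, z ∈ ctx.fspan (Facc ∪ F)) (hvu : (v, u) ∈ outcomeSpan (xs ++ zs) y) :
    ctx.Shadows y (ctx.fspan (Eacc ∪ E)) (ctx.fspan (Facc ∪ F)) (vec ++ [u, v]) (xs ++ zs) where
  subset_fspan := ctx.fspan_subset_fspan (Set.union_subset h.subset_fspan hE)
  mem_Facc := List.forall_mem_append.2
    ⟨fun x hx => ctx.subset_fspan _ (Or.inl (h.mem_Facc x hx)), hzs⟩
  even_length := by
    rw [List.length_append]
    exact h.even_length.add even_two
  answerSpan_le := answerSpan_append_le h.even_length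
    (h.answerSpan_le.trans (outcomeSpan_le_append xs zs y)) hvu

theorem exists_mem_outcomeSpan {u : 𝒲} (hu : u ∈ ctx.fspan (Set.range y)) :
    ∃ m, ∀ xs : List 𝒲, m ≤ xs.length →
      ∃ v ∈ ctx.fspan {x | x ∈ xs}, (v, u) ∈ outcomeSpan xs y := by
  rw [fspan_eq_span] at hu
  obtain ⟨m, hm⟩ := exists_mem_pairSpan ctx.𝔽 hu
  refine ⟨m, fun xs hxs => ?_⟩
  obtain ⟨v, hv, hvu⟩ := hm fun i => xs.getD i 0
  refine ⟨v, ?_, pairSpan_mono hxs _ _ hvu⟩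
  rw [fspan_eq_span]
  refine Submodule.span_mono ?_ hv
  rintro _ ⟨i, hi, rfl⟩
  have hi' : i < xs.length := lt_of_lt_of_le hi hxs
  change xs.getD i 0 ∈ xs
  rw [List.getD_eq_getElem _ _ hi']
  exact List.getElem_mem hi'

theorem IIStratFAt.exists_answer {K : ℝ} {α ξ : Ordinal} {u : 𝒲}
    (hF : ctx.IIStratFAt X (Ordinal.omega0 * α) {l | OutcomeEquiv K l y} Facc xs)
    (hxs : ∀ x ∈ xs, x ∈ Facc) (hu : u ∈ ctx.fspan (Set.range y)) (hu0 : u ≠ 0)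
    (hξ : ξ < α) (n : ℕ) :
    ∃ F, ctx.IsFinDimIn F X ∧ ctx.NatLt n F ∧ ∃ v ≠ 0, v ∈ ctx.fspan (Facc ∪ F) ∧
      ∃ zs : List 𝒲, (∀ z ∈ zs, z ∈ ctx.fspan (Facc ∪ F)) ∧
        (v, u) ∈ outcomeSpan (xs ++ zs) y ∧
        ctx.IIStratFAt X (Ordinal.omega0 * ξ) {l | OutcomeEquiv K l y}
          (ctx.fspan (Facc ∪ F)) (xs ++ zs) := by
  obtain ⟨m, hm⟩ := exists_mem_outcomeSpan hu
  obtain ⟨F, hFX, hnF, zs, hlen, hzs, hnext⟩ :=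
    hF.exists_moves (ordinal_mul_add_lt_mul (Ordinal.natCast_lt_omega0 m) hξ) n
  obtain ⟨v, hv, hvu⟩ := hm (xs ++ zs) (by rw [List.length_append]; omega)
  obtain ⟨zs', houtcome⟩ := hnext.exists_append_mem
  have hv0 : v ≠ 0 :=
    SeqEquiv.fst_ne_zero houtcome (outcomeSpan_le_append (xs ++ zs) zs' y hvu) hu0
  have hmem : ∀ x ∈ xs ++ zs, x ∈ ctx.fspan (Facc ∪ F) :=
    List.forall_mem_append.2 ⟨fun x hx => ctx.subset_fspan _ (Or.inl (hxs x hx)), hzs⟩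
  exact ⟨F, hFX, hnF, v, hv0, ctx.fspan_subset_fspan hmem hv, zs, hzs, hvu, hnext⟩

theorem Shadows.iiStratBAt {K : ℝ} (hK : 0 < K) (hy : ctx.IsBlockSeq y) (hyX : ∀ n, y n ∈ X)
    {α : Ordinal} (hsh : ctx.Shadows y Eacc Facc vec xs)
    (hF : ctx.IIStratFAt X (Ordinal.omega0 * α) {l | OutcomeEquiv K l y} Facc xs) :
    ctx.IIStratBAt X α {l | PairOutcomeEquiv K l} Eacc Facc vec := by
  induction α using WellFoundedLT.induction generalizing Eacc Facc vec xs with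
  | ind α ih =>
    refine IIStratBAt.of_moves ?_ ⟨y, hy, hyX, rfl⟩ fun E hE u hu0 hu n ξ hξ => ?_
    · rintro rfl
      exact .of_answerSpan_le hK (hF.1 (mul_zero _)) hsh.answerSpan_le
    · have huy : u ∈ ctx.fspan (Set.range y) :=
        ctx.fspan_subset_fspan (Set.union_subset hsh.subset_fspan hE.subset_fspan) hu
      obtain ⟨F, hFX, hnF, v, hv0, hv, zs, hzs, hvu, hnext⟩ :=
        hF.exists_answer hsh.mem_Facc huy hu0 hξ n
      exact ⟨F, hFX, hnF, v, hv0, hv, ih ξ hξ (hsh.append hE.subset_fspan hzs hvu) hnext⟩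

end Transfer

end Frame

theorem going_to_adversarial_general
    {𝒲 : Type} [NormedAddCommGroup 𝒲] [NormedSpace ℝ 𝒲] {ctx : Frame 𝒲} {X : Set 𝒲}
    {y : ℕ → 𝒲} (hy : ctx.IsBlockSeq y) (hyX : ∀ n, y n ∈ X) {α : Ordinal} {K : ℝ} (hK : 0 < K)
    (h : ctx.IIStratF X (Ordinal.omega0 * α) {l | OutcomeEquiv K l y}) :
    ctx.IIStratB X α {l | PairOutcomeEquiv K l} :=
  (Frame.Shadows.nil ctx y).iiStratBAt hK hy hyX h

/-- If II has a strategy in `F^{ω·α}_X` to play outcomes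
`K`-equivalent to the block sequence `(y n)` in `X`, then II has a strategy in `B^α_X` to
play outcomes `(u 0, v 0, …, u k, v k)` with `(u i) ∼_K (v i)`. -/
theorem going_to_adversarial
    (𝒲 : Type) [NormedAddCommGroup 𝒲] [NormedSpace ℝ 𝒲] (ctx : Frame 𝒲)
    (X : Set 𝒲) (hX : ctx.IsBlockSubspace X)
    (y : ℕ → 𝒲) (hy : ctx.IsBlockSeq y) (hyX : ∀ n, y n ∈ X)
    (α : Ordinal) (hα : α < (Cardinal.aleph 1).ord) (K : ℝ) (hK : 1 ≤ K)
    (h : ctx.IIStratF X (Ordinal.omega0 * α) {l | OutcomeEquiv K l y}) :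
    ctx.IIStratB X α {l | PairOutcomeEquiv K l} :=
  going_to_adversarial_general hy hyX (zero_lt_one.trans_le hK) h

end Rosendal
end

section
/- Suppose X ⊆ W is a block subspace, (y_n) is a block sequence in W, α < ω₁ and K, C ≥ 1. Assume that (a) player II has a strategy in F^α_X to play outcomes (x_0,…,x_k) with (x_0,…,x_k) ∼_K (y_0,…,y_k), and (b) player II has a strategy in A^α_X to play outcomes (u_0,v_0,…,u_k,v_k) with (u_0,…,u_k) ∼_C (v_0,…,v_k). Then II has a strategy in the Gowers game G^α_X to play outcomes (v_0,…,v_k) with (v_0,…,v_k) ∼_{KC} (y_0,…,y_k). -/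
/-!
II wins the Gowers game by running auxiliary plays of the asymptotic and the adversarial game in
parallel, all three with the same ordinals. In each round the integer dictated by the strategy in
`A^α_X` is handed to the strategy in `F^α_X`. The answer `(E_l, u_l)` of the latter, together with
I's block subspace `Y_l` in the Gowers game, is then a legal move for I in `A^α_X`; and the answer
`(F_l, v_l)` there lies in `Y_l`, so it is a legal move for II in `G^α_X`. At the end
`(v_i) ∼_C (u_i) ∼_K (y_i)`.
-/

open Filter Topology

namespace Rosendal

section Interleave

variable {β : Type*}

/-- The list `[u 0, v 0, u 1, v 1, …]` of the entries of a list of pairs `(u i, v i)`. It turns the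
rounds of an adversarial game, recorded as pairs, into the flat outcome used by
`PairOutcomeEquiv`. -/
def interleave (p : List (β × β)) : List β :=
  p.flatMap fun q => [q.1, q.2]

theorem interleave_concat (p : List (β × β)) (q : β × β) :
    interleave (p ++ [q]) = interleave p ++ [q.1, q.2] := by
  simp [interleave]

theorem length_interleave (p : List (β × β)) : (interleave p).length = 2 * p.length := by
  simp [interleave, mul_comm]

theorem getD_interleave_two_mul (p : List (β × β)) (i : ℕ) (d : β) :
    (interleave p).getD (2 * i) d = (p.map Prod.fst).getD i d := by
  induction p generalizing i with
  | nil => simp [interleave]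
  | cons q p ih =>
    cases i with
    | zero => rfl
    | succ i => exact ih i

theorem getD_interleave_two_mul_add_one (p : List (β × β)) (i : ℕ) (d : β) :
    (interleave p).getD (2 * i + 1) d = (p.map Prod.snd).getD i d := by
  induction p generalizing i with
  | nil => simp [interleave]
  | cons q p ih =>
    cases i with
    | zero => rfl
    | succ i => exact ih i

end Interleave

section Equivalence

variable {𝒲 : Type} [NormedAddCommGroup 𝒲] [NormedSpace ℝ 𝒲] {K L C : ℝ} {k : ℕ}
  {x y z : ℕ → 𝒲}

theorem SeqEquiv.symm_s13 (hK : 0 < K) (h : SeqEquiv K k x y) : SeqEquiv K k y x := by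
  intro a
  obtain ⟨hxy, hyx⟩ := h a
  rw [one_div, inv_mul_le_iff₀ hK] at hxy ⊢
  exact ⟨hyx, hxy⟩

theorem SeqEquiv.trans (hL : 0 ≤ L) (hxy : SeqEquiv K k x y) (hyz : SeqEquiv L k y z) :
    SeqEquiv (K * L) k x z := by
  intro a
  constructor
  · calc 1 / (K * L) * ‖∑ i ∈ Finset.range k, a i • x i‖
        = 1 / L * (1 / K * ‖∑ i ∈ Finset.range k, a i • x i‖) := by
          rw [← mul_assoc, one_div_mul_one_div, mul_comm L]
      _ ≤ 1 / L * ‖∑ i ∈ Finset.range k, a i • y i‖ := by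
          gcongr
          exact (hxy a).1
      _ ≤ ‖∑ i ∈ Finset.range k, a i • z i‖ := (hyz a).1
  · calc ‖∑ i ∈ Finset.range k, a i • z i‖
        ≤ L * ‖∑ i ∈ Finset.range k, a i • y i‖ := (hyz a).2
      _ ≤ L * (K * ‖∑ i ∈ Finset.range k, a i • x i‖) := by
          gcongr
          exact (hxy a).2
      _ = K * L * ‖∑ i ∈ Finset.range k, a i • x i‖ := by ring

theorem pairOutcomeEquiv_interleave_iff {p : List (𝒲 × 𝒲)} :
    PairOutcomeEquiv C (interleave p) ↔
      OutcomeEquiv C (p.map Prod.fst) fun i => (p.map Prod.snd).getD i 0 := by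
  simp only [PairOutcomeEquiv, OutcomeEquiv, length_interleave, getD_interleave_two_mul,
    getD_interleave_two_mul_add_one, List.length_map, Nat.mul_div_cancel_left _ two_pos]

theorem OutcomeEquiv.map_snd_of_interleave (hK : 0 ≤ K) (hC : 0 < C) {p : List (𝒲 × 𝒲)}
    (hfst : OutcomeEquiv K (p.map Prod.fst) y) (hpair : PairOutcomeEquiv C (interleave p)) :
    OutcomeEquiv (K * C) (p.map Prod.snd) y := by
  have hfst_snd := pairOutcomeEquiv_interleave_iff.1 hpair
  unfold OutcomeEquiv at hfst hfst_snd ⊢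
  rw [List.length_map] at hfst hfst_snd ⊢
  rw [mul_comm]
  exact (hfst_snd.symm_s13 hC).trans hK hfst

end Equivalence

namespace Frame

variable {𝒲 : Type} [NormedAddCommGroup 𝒲] [NormedSpace ℝ 𝒲] {ctx : Frame 𝒲} {X : Set 𝒲}
  {R S T : Set (List 𝒲)} {α : Ordinal} {Eacc Facc : Set 𝒲} {vec : List 𝒲}

theorem iiWinsF_iff :
    ctx.IIWinsF X S α Facc vec ↔
      ∀ n : ℕ, ∀ ξ < α, ∃ F, ctx.IsFinDimIn F X ∧ ctx.NatLt n F ∧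
        ∃ x, x ≠ 0 ∧ x ∈ ctx.fspan (Facc ∪ F) ∧ (ξ = 0 → vec ++ [x] ∈ S) ∧
          (ξ ≠ 0 → ctx.IIWinsF X S ξ (ctx.fspan (Facc ∪ F)) (vec ++ [x])) := by
  rw [IIWinsF, WellFounded.fix_eq]

theorem iiWinsG_iff :
    ctx.IIWinsG X S α Facc vec ↔
      ∀ Y, ctx.IsBlockSubspaceOf Y X → ∀ ξ < α, ∃ F, ctx.IsFinDimIn F Y ∧
        ∃ x, x ≠ 0 ∧ x ∈ ctx.fspan (Facc ∪ F) ∧ (ξ = 0 → vec ++ [x] ∈ S) ∧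
          (ξ ≠ 0 → ctx.IIWinsG X S ξ (ctx.fspan (Facc ∪ F)) (vec ++ [x])) := by
  rw [IIWinsG, WellFounded.fix_eq]

theorem iiWinsA_iff :
    ctx.IIWinsA X S α Eacc Facc vec ↔
      ∃ n : ℕ, ∀ E, ctx.IsFinDimIn E X → ctx.NatLt n E →
        ∀ x, x ≠ 0 → x ∈ ctx.fspan (Eacc ∪ E) →
        ∀ Y, ctx.IsBlockSubspaceOf Y X → ∀ ξ < α, ∃ F, ctx.IsFinDimIn F Y ∧
          ∃ y, y ≠ 0 ∧ y ∈ ctx.fspan (Facc ∪ F) ∧ (ξ = 0 → vec ++ [x, y] ∈ S) ∧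
            (ξ ≠ 0 → ctx.IIWinsA X S ξ (ctx.fspan (Eacc ∪ E)) (ctx.fspan (Facc ∪ F))
              (vec ++ [x, y])) := by
  rw [IIWinsA, WellFounded.fix_eq]

theorem iiWinsG_of_iiWinsF_of_iiWinsA
    (hST : ∀ p : List (𝒲 × 𝒲), p.map Prod.fst ∈ S → interleave p ∈ T → p.map Prod.snd ∈ R)
    (p : List (𝒲 × 𝒲)) (hF : ctx.IIWinsF X S α Eacc (p.map Prod.fst))
    (hA : ctx.IIWinsA X T α Eacc Facc (interleave p)) :
    ctx.IIWinsG X R α Facc (p.map Prod.snd) := by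
  induction α using WellFoundedLT.induction generalizing Eacc Facc p with
  | ind α ih =>
    refine iiWinsG_iff.2 fun Y hY ξ hξ => ?_
    obtain ⟨n, hA⟩ := iiWinsA_iff.1 hA
    obtain ⟨E, hEX, hnE, u, hu, huE, hS, hF⟩ := iiWinsF_iff.1 hF n ξ hξ
    obtain ⟨F, hFY, v, hv, hvF, hT, hA⟩ := hA E hEX hnE u hu huE Y hY ξ hξ
    have map_fst : (p ++ [(u, v)]).map Prod.fst = p.map Prod.fst ++ [u] := List.map_append
    have map_snd : (p ++ [(u, v)]).map Prod.snd = p.map Prod.snd ++ [v] := List.map_append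
    rw [← map_fst] at hS hF
    rw [← interleave_concat p (u, v)] at hT hA
    refine ⟨F, hFY, v, hv, hvF, ?_⟩
    rw [← map_snd]
    exact ⟨fun h0 => hST _ (hS h0) (hT h0), fun h0 => ih ξ hξ _ (hF h0) (hA h0)⟩

theorem iiStratG_of_iiStratF_of_iiStratA
    (hST : ∀ p : List (𝒲 × 𝒲), p.map Prod.fst ∈ S → interleave p ∈ T → p.map Prod.snd ∈ R)
    (hF : ctx.IIStratF X α S) (hA : ctx.IIStratA X α T) : ctx.IIStratG X α R :=
  ⟨fun h0 => hST [] (hF.1 h0) (hA.1 h0),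
    fun h0 => iiWinsG_of_iiWinsF_of_iiWinsA hST [] (hF.2 h0) (hA.2 h0)⟩

end Frame

theorem gowers_game_transfer_general
    {𝒲 : Type} [NormedAddCommGroup 𝒲] [NormedSpace ℝ 𝒲] {ctx : Frame 𝒲}
    {X : Set 𝒲} {y : ℕ → 𝒲} {α : Ordinal} {K C : ℝ} (hK : 0 < K) (hC : 0 < C)
    (ha : ctx.IIStratF X α {l | OutcomeEquiv K l y})
    (hb : ctx.IIStratA X α {l | PairOutcomeEquiv C l}) :
    ctx.IIStratG X α {l | OutcomeEquiv (K * C) l y} :=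
  Frame.iiStratG_of_iiStratF_of_iiStratA
    (fun _ hfst hpair => OutcomeEquiv.map_snd_of_interleave hK.le hC hfst hpair) ha hb

/-- If (a) II has a strategy in `F^α_X` to play outcomes
`K`-equivalent to `(y n)` and (b) II has a strategy in `A^α_X` to play outcomes
`(u 0, v 0, …, u k, v k)` with `(u i) ∼_C (v i)`, then II has a strategy in the Gowers
game `G^α_X` to play outcomes `KC`-equivalent to `(y n)`. -/
theorem gowers_game_transfer
    (𝒲 : Type) [NormedAddCommGroup 𝒲] [NormedSpace ℝ 𝒲] (ctx : Frame 𝒲)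
    (X : Set 𝒲) (hX : ctx.IsBlockSubspace X)
    (y : ℕ → 𝒲) (hy : ctx.IsBlockSeq y)
    (α : Ordinal) (hα : α < (Cardinal.aleph 1).ord)
    (K C : ℝ) (hK : 1 ≤ K) (hC : 1 ≤ C)
    (ha : ctx.IIStratF X α {l | OutcomeEquiv K l y})
    (hb : ctx.IIStratA X α {l | PairOutcomeEquiv C l}) :
    ctx.IIStratG X α {l | OutcomeEquiv (K * C) l y} :=
  gowers_game_transfer_general (zero_lt_one.trans_le hK) (zero_lt_one.trans_le hC) ha hb

end Rosendal
end
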